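/- For every structure A and every fragment 𝔸 of L_{∞,ω} (a set of formulas closed under negation and subformulas), there is an elementary extension G of A that is 𝔸-generic: for every ψ ∈ 𝔸 and tuple ā ∈ G, G decides ψ(ā). -/

import Mathlib

open FirstOrder

universe u

namespace InfinitaryForcing

variable (L : FirstOrder.Language.{u, u})

/-- Infinitary formulas of `L_{∞,ω}`: set-indexed conjunctions and disjunctions,
finitary quantification, free variables among `Fin n`. -/
inductive InfForm : ℕ → Type (u + 1)
  | equal {n : ℕ} (t₁ t₂ : L.Term (Fin n)) : InfForm n
  | rel {n l : ℕ} (R : L.Relations l) (ts : Fin l → L.Term (Fin n)) : InfForm n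
  | not {n : ℕ} (φ : InfForm n) : InfForm n
  | disj {n : ℕ} {ι : Type u} (Φ : ι → InfForm n) : InfForm n
  | conj {n : ℕ} {ι : Type u} (Φ : ι → InfForm n) : InfForm n
  | ex {n : ℕ} (φ : InfForm (n + 1)) : InfForm n
  | all {n : ℕ} (φ : InfForm (n + 1)) : InfForm n

variable {L}

/-- Tarskian satisfaction for infinitary formulas. -/
def Realize : ∀ {n : ℕ}, InfForm L n → ∀ (M : Type u), L.Structure M → (Fin n → M) → Prop
  | _, .equal t₁ t₂, _M, S, v => letI := S; t₁.realize v = t₂.realize v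
  | _, .rel R ts, _M, S, v => letI := S; Language.Structure.RelMap R fun i => (ts i).realize v
  | _, .not φ, M, S, v => ¬ Realize φ M S v
  | _, .disj Φ, M, S, v => ∃ i, Realize (Φ i) M S v
  | _, .conj Φ, M, S, v => ∀ i, Realize (Φ i) M S v
  | _, .ex φ, M, S, v => ∃ b : M, Realize φ M S (Fin.snoc v b)
  | _, .all φ, M, S, v => ∀ b : M, Realize φ M S (Fin.snoc v b)

/-- Elementary embeddings, with the structures made explicit. -/
abbrev ElemEmb (M N : Type u) (SM : L.Structure M) (SN : L.Structure N) : Type u :=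
  @FirstOrder.Language.ElementaryEmbedding L M N SM SN

/-- The strong forcing relation `A ⊩ ψ(ā)`, where conditions are structures
ordered by elementary extension. -/
def Forces : ∀ {n : ℕ}, InfForm L n → ∀ (M : Type u), L.Structure M → (Fin n → M) → Prop
  | _, .equal t₁ t₂, _M, S, v => letI := S; t₁.realize v = t₂.realize v
  | _, .rel R ts, _M, S, v => letI := S; Language.Structure.RelMap R fun i => (ts i).realize v
  | _, .not φ, M, S, v =>
      ∀ (N : Type u) (SN : L.Structure N) (f : ElemEmb M N S SN),
        ¬ Forces φ N SN (fun i => f.toFun (v i))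
  | _, .disj Φ, M, S, v => ∃ i, Forces (Φ i) M S v
  | _, .conj Φ, M, S, v =>
      ∀ (N : Type u) (SN : L.Structure N) (f : ElemEmb M N S SN) (i : _),
        ∃ (P : Type u) (SP : L.Structure P) (g : ElemEmb N P SN SP),
          Forces (Φ i) P SP (fun k => g.toFun (f.toFun (v k)))
  | _, .ex φ, M, S, v => ∃ b : M, Forces φ M S (Fin.snoc v b)
  | _, .all φ, M, S, v =>
      ∀ (N : Type u) (SN : L.Structure N) (f : ElemEmb M N S SN) (b : N),
        ∃ (P : Type u) (SP : L.Structure P) (g : ElemEmb N P SN SP),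
          Forces φ P SP (Fin.snoc (fun k => g.toFun (f.toFun (v k))) (g.toFun b))

/-- `M` decides `ψ(v)` if it strongly forces `ψ(v)` or `¬ψ(v)`. -/
def Decides {n : ℕ} (ψ : InfForm L n) (M : Type u) (S : L.Structure M) (v : Fin n → M) : Prop :=
  Forces ψ M S v ∨ Forces ψ.not M S v

/-- The weak forcing relation `A ⊩* ψ := A ⊩ ¬¬ψ`. -/
def WForces {n : ℕ} (ψ : InfForm L n) (M : Type u) (S : L.Structure M) (v : Fin n → M) : Prop :=
  Forces ψ.not.not M S v

variable (L)

/-- Finitary (`L_{ω,ω}`) formulas among the infinitary ones. -/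
inductive InfForm.IsFinitary : ∀ {n : ℕ}, InfForm L n → Prop
  | equal {n} (t₁ t₂ : L.Term (Fin n)) : IsFinitary (.equal t₁ t₂)
  | rel {n l} (R : L.Relations l) (ts : Fin l → L.Term (Fin n)) : IsFinitary (.rel R ts)
  | not {n} {φ : InfForm L n} : IsFinitary φ → IsFinitary φ.not
  | disj {n} {ι : Type u} (_ : Finite ι) {Φ : ι → InfForm L n} :
      (∀ i, IsFinitary (Φ i)) → IsFinitary (.disj Φ)
  | conj {n} {ι : Type u} (_ : Finite ι) {Φ : ι → InfForm L n} :
      (∀ i, IsFinitary (Φ i)) → IsFinitary (.conj Φ)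
  | ex {n} {φ : InfForm L (n + 1)} : IsFinitary φ → IsFinitary φ.ex
  | all {n} {φ : InfForm L (n + 1)} : IsFinitary φ → IsFinitary φ.all

/-- Quantifier-free infinitary formulas. -/
inductive InfForm.IsQF : ∀ {n : ℕ}, InfForm L n → Prop
  | equal {n} (t₁ t₂ : L.Term (Fin n)) : IsQF (.equal t₁ t₂)
  | rel {n l} (R : L.Relations l) (ts : Fin l → L.Term (Fin n)) : IsQF (.rel R ts)
  | not {n} {φ : InfForm L n} : IsQF φ → IsQF φ.not
  | disj {n} {ι : Type u} {Φ : ι → InfForm L n} : (∀ i, IsQF (Φ i)) → IsQF (.disj Φ)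
  | conj {n} {ι : Type u} {Φ : ι → InfForm L n} : (∀ i, IsQF (Φ i)) → IsQF (.conj Φ)

/-- `L_{ω₁,ω}` formulas: all conjunctions and disjunctions are countable. -/
inductive InfForm.IsCtble : ∀ {n : ℕ}, InfForm L n → Prop
  | equal {n} (t₁ t₂ : L.Term (Fin n)) : IsCtble (.equal t₁ t₂)
  | rel {n l} (R : L.Relations l) (ts : Fin l → L.Term (Fin n)) : IsCtble (.rel R ts)
  | not {n} {φ : InfForm L n} : IsCtble φ → IsCtble φ.not
  | disj {n} {ι : Type u} (_ : Countable ι) {Φ : ι → InfForm L n} :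
      (∀ i, IsCtble (Φ i)) → IsCtble (.disj Φ)
  | conj {n} {ι : Type u} (_ : Countable ι) {Φ : ι → InfForm L n} :
      (∀ i, IsCtble (Φ i)) → IsCtble (.conj Φ)
  | ex {n} {φ : InfForm L (n + 1)} : IsCtble φ → IsCtble φ.ex
  | all {n} {φ : InfForm L (n + 1)} : IsCtble φ → IsCtble φ.all

/-- A fragment of `L_{∞,ω}`: a family of sets of formulas closed under negation
and subformulas. -/
structure IsFragment (𝔸 : ∀ n : ℕ, Set (InfForm L n)) : Prop where
  not_mem : ∀ {n} {φ : InfForm L n}, φ ∈ 𝔸 n → φ.not ∈ 𝔸 n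
  of_not : ∀ {n} {φ : InfForm L n}, φ.not ∈ 𝔸 n → φ ∈ 𝔸 n
  of_disj : ∀ {n} {ι : Type u} {Φ : ι → InfForm L n}, InfForm.disj Φ ∈ 𝔸 n → ∀ i, Φ i ∈ 𝔸 n
  of_conj : ∀ {n} {ι : Type u} {Φ : ι → InfForm L n}, InfForm.conj Φ ∈ 𝔸 n → ∀ i, Φ i ∈ 𝔸 n
  of_ex : ∀ {n} {φ : InfForm L (n + 1)}, φ.ex ∈ 𝔸 n → φ ∈ 𝔸 (n + 1)
  of_all : ∀ {n} {φ : InfForm L (n + 1)}, φ.all ∈ 𝔸 n → φ ∈ 𝔸 (n + 1)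

variable {L}

/-- `G` is `𝔸`-generic if it decides every instance of every formula of `𝔸`. -/
def IsGeneric (𝔸 : ∀ n : ℕ, Set (InfForm L n)) (G : Type u) (SG : L.Structure G) : Prop :=
  ∀ (n : ℕ) (ψ : InfForm L n), ψ ∈ 𝔸 n → ∀ v : Fin n → G, Decides ψ G SG v

variable (L)

mutual
  /-- Finitary `∃ₙ` formulas: `n` alternating blocks of quantifiers beginning
  with existentials, counting finite conjunctions/disjunctions as free. -/
  inductive IsEx : ℕ → ∀ {k : ℕ}, InfForm L k → Prop
    | equal {m k} (t₁ t₂ : L.Term (Fin k)) : IsEx m (.equal t₁ t₂)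
    | rel {m k l} (R : L.Relations l) (ts : Fin l → L.Term (Fin k)) : IsEx m (.rel R ts)
    | not {m k} {φ : InfForm L k} : IsAll m φ → IsEx m φ.not
    | disj {m k} {ι : Type u} (_ : Finite ι) {Φ : ι → InfForm L k} :
        (∀ i, IsEx m (Φ i)) → IsEx m (.disj Φ)
    | conj {m k} {ι : Type u} (_ : Finite ι) {Φ : ι → InfForm L k} :
        (∀ i, IsEx m (Φ i)) → IsEx m (.conj Φ)
    | ex {m k} {φ : InfForm L (k + 1)} : IsEx m φ → 1 ≤ m → IsEx m φ.ex
    | exStep {m k} {φ : InfForm L (k + 1)} : IsAll m φ → IsEx (m + 1) φ.ex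

  /-- Finitary `∀ₙ` formulas. -/
  inductive IsAll : ℕ → ∀ {k : ℕ}, InfForm L k → Prop
    | equal {m k} (t₁ t₂ : L.Term (Fin k)) : IsAll m (.equal t₁ t₂)
    | rel {m k l} (R : L.Relations l) (ts : Fin l → L.Term (Fin k)) : IsAll m (.rel R ts)
    | not {m k} {φ : InfForm L k} : IsEx m φ → IsAll m φ.not
    | disj {m k} {ι : Type u} (_ : Finite ι) {Φ : ι → InfForm L k} :
        (∀ i, IsAll m (Φ i)) → IsAll m (.disj Φ)
    | conj {m k} {ι : Type u} (_ : Finite ι) {Φ : ι → InfForm L k} :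
        (∀ i, IsAll m (Φ i)) → IsAll m (.conj Φ)
    | all {m k} {φ : InfForm L (k + 1)} : IsAll m φ → 1 ≤ m → IsAll m φ.all
    | allStep {m k} {φ : InfForm L (k + 1)} : IsEx m φ → IsAll (m + 1) φ.all
end

/-- `f : A → B` is an `n`-elementary map (`A ⪯ₙ B` when `f` is an inclusion):
every finitary `∃ₙ` or `∀ₙ` formula transfers along `f`. -/
def IsNElemMap (n : ℕ) {A B : Type u} (SA : L.Structure A) (SB : L.Structure B)
    (f : A → B) : Prop :=
  ∀ (k : ℕ) (φ : InfForm L k), (IsEx L n φ ∨ IsAll L n φ) →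
    ∀ v : Fin k → A, Realize φ A SA v ↔ Realize φ B SB (fun i => f (v i))

/-- `f : A → B` is an elementary map: every finitary formula transfers along `f`. -/
def IsElemMap {A B : Type u} (SA : L.Structure A) (SB : L.Structure B)
    (f : A → B) : Prop :=
  ∀ (k : ℕ) (φ : InfForm L k), InfForm.IsFinitary L φ →
    ∀ v : Fin k → A, Realize φ A SA v ↔ Realize φ B SB (fun i => f (v i))

open FirstOrder.Language

/-- The tuples `v` and `w` satisfy the same first-order formulas. -/
def SameType {L : FirstOrder.Language.{u, u}} {α M N : Type u} [L.Structure M] [L.Structure N]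
    (v : α → M) (w : α → N) : Prop :=
  ∀ φ : L.Formula α, φ.Realize v ↔ φ.Realize w

namespace SameType

variable {L : FirstOrder.Language.{u, u}} {α γ M N P : Type u}
  [L.Structure M] [L.Structure N] [L.Structure P]

theorem of_elementaryEmbedding (f : M ↪ₑ[L] N) (v : α → M) : SameType (L := L) v (f ∘ v) :=
  fun φ => (f.map_formula φ v).symm

theorem symm {v : α → M} {w : α → N} (h : SameType (L := L) v w) : SameType (L := L) w v :=
  fun φ => (h φ).symm

theorem trans {v : α → M} {w : α → N} {x : α → P} (h : SameType (L := L) v w)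
    (h' : SameType (L := L) w x) : SameType (L := L) v x :=
  fun φ => (h φ).trans (h' φ)

theorem comp {v : α → M} {w : α → N} (h : SameType (L := L) v w) (s : γ → α) :
    SameType (L := L) (v ∘ s) (w ∘ s) := fun φ => by
  simpa only [Formula.realize_relabel] using h (φ.relabel s)

theorem exists_realize [Finite γ] {v : α → M} {w : α → N} (h : SameType (L := L) v w)
    (φ : L.Formula (α ⊕ γ)) (c : γ → N) (hc : φ.Realize (Sum.elim w c)) :
    ∃ b : γ → M, φ.Realize (Sum.elim v b) :=
  Formula.realize_iExs.1 ((h (φ.iExs γ)).2 (Formula.realize_iExs.2 ⟨c, hc⟩))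

/-- A formula about `N` can be satisfied in `M` by an assignment sending `w` to `v`, provided
`v` and `w` have the same type. -/
theorem exists_realize_comp_eq [Nonempty M] {v : α → M} {w : α → N}
    (h : SameType (L := L) v w) (χ : L.Formula N) (hχ : χ.Realize (id : N → N)) :
    ∃ e : N → M, e ∘ w = v ∧ χ.Realize e := by
  classical
  have hsep : ∀ i j, w i = w j → v i = v j := fun i j hij => by
    have := (h ((Term.var i).equal (Term.var j))).2
    simpa [hij] using this
  let s : χ.freeVarFinset → α ⊕ χ.freeVarFinset := fun x =>
    if hx : ∃ i, w i = x then Sum.inl hx.choose else Sum.inr x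
  have hN : Formula.Realize (BoundedFormula.restrictFreeVar χ s : L.Formula (α ⊕ χ.freeVarFinset))
      (Sum.elim w ((↑) : χ.freeVarFinset → N)) := by
    refine (BoundedFormula.realize_restrictFreeVar id fun a => ?_).2 hχ
    by_cases hx : ∃ i, w i = a
    · simpa [s, hx] using hx.choose_spec
    · simp [s, hx]
  obtain ⟨b, hb⟩ := h.exists_realize _ _ hN
  let e : N → M := fun x =>
    if hx : ∃ i, w i = x then v hx.choose
    else if hx' : x ∈ χ.freeVarFinset then b ⟨x, hx'⟩ else Classical.arbitrary M
  refine ⟨e, ?_, ?_⟩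
  · funext i
    have hx : ∃ j, w j = w i := ⟨i, rfl⟩
    simp only [Function.comp, e, dif_pos hx]
    exact hsep _ _ hx.choose_spec
  · refine (BoundedFormula.realize_restrictFreeVar e fun a => ?_).1 hb
    by_cases hx : ∃ i, w i = a
    · simp [s, e, hx]
    · simp [s, e, hx]

end SameType

/-- Compactness over a structure: a family of formulas with parameters in `M` that is finitely
satisfiable in `M` is satisfiable in an elementary extension of `M`. -/
theorem exists_elementaryExtension_realize {L : FirstOrder.Language.{u, u}} {M β κ : Type u}
    [L.Structure M] [Nonempty M] (Γ : κ → L.Formula (M ⊕ β))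
    (h : ∀ K : Finset κ, ∃ e : β → M, ∀ k ∈ K, (Γ k).Realize (Sum.elim id e)) :
    ∃ (P : Type u) (_ : L.Structure P) (g : M ↪ₑ[L] P) (e : β → P),
      ∀ k, (Γ k).Realize (Sum.elim g e) := by
  classical
  choose e he using h
  let U : Ultrafilter (Finset κ) := Ultrafilter.of Filter.atTop
  let g : M ↪ₑ[L] (U : Filter (Finset κ)).Product fun _ => M :=
    { toFun := fun m => ((fun _ => m : Finset κ → M) : (U : Filter (Finset κ)).Product fun _ => M)
      map_formula' := fun n φ x => by
        refine (Ultraproduct.realize_formula_cast φ fun i _ => x i).trans ?_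
        exact Filter.eventually_const }
  refine ⟨(U : Filter (Finset κ)).Product fun _ => M, inferInstance, g, fun b =>
    ((fun K => e K b : Finset κ → M) : (U : Filter (Finset κ)).Product fun _ => M), fun k => ?_⟩
  have key := Ultraproduct.realize_formula_cast (u := U) (Γ k)
    (Sum.elim (fun m _ => m) fun b K => e K b : M ⊕ β → Finset κ → M)
  have hev : ∀ᶠ K in (U : Filter (Finset κ)), (Γ k).Realize
      fun i => (Sum.elim (fun m _ => m) fun b K => e K b : M ⊕ β → Finset κ → M) i K := by
    refine Ultrafilter.of_le _ ((Filter.eventually_ge_atTop {k}).mono fun K hK => ?_)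
    convert! he K k (hK (Finset.mem_singleton_self k)) using 1
    funext i
    cases i <;> rfl
  convert! key.2 hev using 1
  funext i
  cases i <;> rfl

/-- Two structures amalgamate elementarily over tuples of the same type. -/
theorem SameType.exists_amalgam {L : FirstOrder.Language.{u, u}} {α M N : Type u}
    [L.Structure M] [L.Structure N] [Nonempty M] {v : α → M} {w : α → N}
    (h : SameType (L := L) v w) :
    ∃ (P : Type u) (_ : L.Structure P) (f : M ↪ₑ[L] P) (g : N ↪ₑ[L] P), f ∘ v = g ∘ w := by
  classical
  let Γ : {φ : L.Formula N // φ.Realize (id : N → N)} ⊕ α → L.Formula (M ⊕ N) :=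
    Sum.elim (fun φ => φ.1.relabel Sum.inr)
      fun i => (Term.var (Sum.inl (v i))).equal (Term.var (Sum.inr (w i)))
  obtain ⟨P, SP, f, e, he⟩ := exists_elementaryExtension_realize Γ fun K => by
    have : Finite {φ : {φ : L.Formula N // φ.Realize (id : N → N)} // Sum.inl φ ∈ K} :=
      Finite.of_injective (β := K) (fun φ => ⟨_, φ.2⟩) fun φ ψ h => by
        simpa [Subtype.ext_iff] using h
    obtain ⟨e, hew, hχ⟩ := h.exists_realize_comp_eq
      (Formula.iInf fun φ : {φ : {φ : L.Formula N // φ.Realize (id : N → N)} // Sum.inl φ ∈ K} =>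
        φ.1.1)
      (Formula.realize_iInf.2 fun φ => φ.1.2)
    refine ⟨e, fun k hk => ?_⟩
    cases k with
    | inl φ => simpa [Γ] using Formula.realize_iInf.1 hχ ⟨φ, hk⟩
    | inr i => simpa [Γ] using (congrFun hew i).symm
  have heφ : ∀ φ : L.Formula N, φ.Realize (id : N → N) → φ.Realize e := fun φ hφ => by
    simpa [Γ] using he (Sum.inl ⟨φ, hφ⟩)
  refine ⟨P, SP, f, ⟨e, fun n φ x => ?_⟩, funext fun i => by
    have := he (Sum.inr i)
    simp only [Γ, Sum.elim_inr, Formula.realize_equal, Term.realize_var, Sum.elim_inl] at this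
    exact this⟩
  have h₁ := heφ (φ.relabel x)
  have h₂ := heφ (φ.relabel x).not
  simp only [Formula.realize_not, Formula.realize_relabel, Function.id_comp] at h₁ h₂
  exact ⟨fun h => by_contra fun hn => h₂ hn h, h₁⟩

/-- Every structure has an elementary extension realizing every type over it that is realized in
some elementary extension. -/
theorem exists_realizing_types {L : FirstOrder.Language.{u, u}} (M : Type u) [L.Structure M] :
    ∃ (P : Type u) (_ : L.Structure P) (g : M ↪ₑ[L] P),
      ∀ (N : Type u) [L.Structure N] (f : M ↪ₑ[L] N) (c : N), ∃ b : P,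
        SameType (L := L) (Sum.elim g fun _ : PUnit.{u + 1} => b) (Sum.elim f fun _ => c) := by
  classical
  rcases isEmpty_or_nonempty M with hM | hM
  · refine ⟨M, inferInstance, .refl L M, fun N _ f c => ?_⟩
    obtain ⟨b, -⟩ := (SameType.of_elementaryEmbedding f (id : M → M)).exists_realize
      (⊤ : L.Formula (M ⊕ PUnit.{u + 1})) (fun _ => c) (by simp [Formula.Realize])
    exact hM.elim (b default)
  let β : Type u := {p : Set (L.Formula (M ⊕ PUnit.{u + 1})) //
    ∃ (N : Type u) (_ : L.Structure N) (f : M ↪ₑ[L] N) (c : N),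
      p = {φ | φ.Realize (Sum.elim f fun _ => c)}}
  let Γ : (Σ p : β, p.1) → L.Formula (M ⊕ β) :=
    fun k => k.2.1.relabel (Sum.map id fun _ => k.1)
  obtain ⟨P, SP, g, e, he⟩ := exists_elementaryExtension_realize Γ fun K => by
    have hp : ∀ p : β, ∃ b : M, ∀ φ : p.1, (⟨p, φ⟩ : Σ p : β, p.1) ∈ K →
        φ.1.Realize (Sum.elim id fun _ => b) := by
      rintro ⟨p, N, SN, f, c, rfl⟩
      have : Finite {φ : {φ : L.Formula (M ⊕ PUnit.{u + 1}) | φ.Realize (Sum.elim f fun _ => c)} //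
          (⟨⟨_, N, SN, f, c, rfl⟩, φ⟩ : Σ p : β, p.1) ∈ K} :=
        Finite.of_injective (β := K) (fun φ => ⟨_, φ.2⟩) fun φ ψ h => by
          simpa [Subtype.ext_iff] using h
      obtain ⟨b, hb⟩ := (SameType.of_elementaryEmbedding f (id : M → M)).exists_realize
        (Formula.iInf fun φ : {φ : {φ : L.Formula (M ⊕ PUnit.{u + 1}) |
          φ.Realize (Sum.elim f fun _ => c)} //
          (⟨⟨_, N, SN, f, c, rfl⟩, φ⟩ : Σ p : β, p.1) ∈ K} => φ.1.1) (fun _ => c)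
        (Formula.realize_iInf.2 fun φ => φ.1.2)
      exact ⟨b default, fun φ hφ => Formula.realize_iInf.1 hb ⟨φ, hφ⟩⟩
    choose b hb using hp
    refine ⟨b, fun k hk => ?_⟩
    simpa [Γ, Sum.elim_comp_map] using! hb k.1 k.2 hk
  refine ⟨P, SP, g, fun N SN f c => ?_⟩
  let p : β := ⟨_, N, SN, f, c, rfl⟩
  have hp : ∀ φ : L.Formula (M ⊕ PUnit.{u + 1}), φ.Realize (Sum.elim f fun _ => c) →
      φ.Realize (Sum.elim g fun _ => e p) := fun φ hφ => by
    simpa [Γ, Sum.elim_comp_map] using! he ⟨p, φ, hφ⟩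
  exact ⟨e p, fun φ => ⟨fun h => by_contra fun hn => hp φ.not hn h, hp φ⟩⟩

/-- Tarski's elementary chain theorem, for direct limits. -/
theorem realize_directLimit_of {L : FirstOrder.Language.{u, u}} {ι : Type} [Preorder ι]
    [IsDirectedOrder ι] [Nonempty ι] {G : ι → Type u} [∀ i, L.Structure (G i)]
    (f : ∀ i j, i ≤ j → G i ↪[L] G j) [DirectedSystem G fun i j h => f i j h]
    (hf : ∀ i j h, ∃ e : G i ↪ₑ[L] G j, ⇑e = f i j h) {α : Type*} {n : ℕ}
    (φ : L.BoundedFormula α n) (i : ι) (v : α → G i) (xs : Fin n → G i) :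
    φ.Realize (Language.DirectLimit.of L ι G f i ∘ v) (Language.DirectLimit.of L ι G f i ∘ xs) ↔
      φ.Realize v xs := by
  induction φ generalizing i with
  | falsum => rfl
  | equal t₁ t₂ =>
    simp only [BoundedFormula.Realize, ← Sum.comp_elim, HomClass.realize_term]
    exact (Language.DirectLimit.of L ι G f i).injective.eq_iff
  | rel R ts =>
    simp only [BoundedFormula.Realize, ← Sum.comp_elim, HomClass.realize_term]
    exact (Language.DirectLimit.of L ι G f i).map_rel R _
  | imp _ _ ih₁ ih₂ => simp only [BoundedFormula.realize_imp, ih₁, ih₂]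
  | all φ ih =>
    refine ⟨fun h x => ?_, fun h z => ?_⟩
    · rw [← ih, Fin.comp_snoc]
      exact h _
    · obtain ⟨j, y, rfl⟩ := Language.DirectLimit.exists_of z
      obtain ⟨k, hik, hjk⟩ := directed_of (· ≤ ·) i j
      obtain ⟨e, he⟩ := hf i k hik
      have hlim : ⇑(Language.DirectLimit.of L ι G f i) = Language.DirectLimit.of L ι G f k ∘ e :=
        funext fun x => by rw [Function.comp_apply, he, Language.DirectLimit.of_f]
      rw [← Language.DirectLimit.of_f (hij := hjk), hlim, Function.comp_assoc, Function.comp_assoc,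
        ← Fin.comp_snoc, ih]
      exact (e.map_boundedFormula φ.all v xs).2 h _

/-- A structure is `ω`-saturated if it realizes every type over a finite tuple that is realized
in an elementary extension. -/
def IsOmegaSaturated (L : FirstOrder.Language.{u, u}) (G : Type u) [L.Structure G] : Prop :=
  ∀ (N : Type u) [L.Structure N] (f : G ↪ₑ[L] N) (n : ℕ) (v : Fin n → G) (c : N), ∃ b : G,
    SameType (L := L) ((Fin.snoc v b : Fin (n + 1) → G) ∘ ULift.down.{u})
      ((Fin.snoc (f ∘ v) c : Fin (n + 1) → N) ∘ ULift.down.{u})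

theorem exists_isOmegaSaturated {L : FirstOrder.Language.{u, u}} (A : Type u) [SA : L.Structure A] :
    ∃ (G : Type u) (_ : L.Structure G) (_ : A ↪ₑ[L] G), IsOmegaSaturated L G := by
  choose P SP g hg using fun (M : Type u) (S : L.Structure M) => exists_realizing_types (L := L) M
  let seq : ℕ → Σ M : Type u, L.Structure M :=
    fun k => Nat.rec ⟨A, SA⟩ (fun _ X => ⟨P X.1 X.2, SP X.1 X.2⟩) k
  let G : ℕ → Type u := fun k => (seq k).1
  let _ : ∀ k, L.Structure (G k) := fun k => (seq k).2
  let s : ∀ k, G k ↪ₑ[L] G (k + 1) := fun k => g (G k) _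
  let f : ∀ i j, i ≤ j → G i ↪[L] G j := DirectedSystem.natLERec fun k => (s k).toEmbedding
  have hf : ∀ i j h, ∃ e : G i ↪ₑ[L] G j, ⇑e = f i j h := fun i j h => by
    induction j, h using Nat.le_induction with
    | base => exact ⟨.refl L _, by simp [f, Nat.leRecOn_self]; rfl⟩
    | succ j h ih =>
      obtain ⟨e, he⟩ := ih
      refine ⟨(s j).comp e, funext fun x => ?_⟩
      simp only [f, DirectedSystem.coe_natLERec] at he ⊢
      rw [Nat.leRecOn_succ h, ElementaryEmbedding.comp_apply, he]
      rfl
  let of : ∀ k, G k ↪ₑ[L] Language.DirectLimit G f := fun k =>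
    { toFun := Language.DirectLimit.of L ℕ G f k
      map_formula' := fun n φ x => by
        have := realize_directLimit_of f hf φ k x default
        rwa [Subsingleton.elim (_ ∘ default) default] at this }
  have hs : ∀ k x, of (k + 1) (s k x) = of k x := fun k x => by
    have : s k x = f k (k + 1) k.le_succ x := by
      simp [f, Nat.leRecOn_succ' (C := G)]
    rw [this]
    exact Language.DirectLimit.of_f
  refine ⟨Language.DirectLimit G f, inferInstance, of 0, fun N SN F n v c => ?_⟩
  obtain ⟨k, y, rfl⟩ := Language.DirectLimit.exists_quotient_mk'_sigma_mk'_eq G f v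
  obtain ⟨b, hb⟩ := hg (G k) _ N (F.comp (of k)) c
  refine ⟨of (k + 1) b, ?_⟩
  have := (((SameType.of_elementaryEmbedding (of (k + 1)) _).symm.trans hb).comp
    ((Fin.snoc (Sum.inl ∘ y) (Sum.inr default) : Fin (n + 1) → G k ⊕ PUnit.{u + 1}) ∘
      ULift.down.{u}))
  convert! this using 1
  · rw [← Function.comp_assoc, Fin.comp_snoc]
    congr 2
    funext i
    exact (hs k (y i)).symm
  · rw [← Function.comp_assoc, Fin.comp_snoc]
    rfl

/-- Strong forcing is preserved by elementary extensions. -/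
theorem Forces.mono {L : FirstOrder.Language.{u, u}} {n : ℕ} {ψ : InfForm L n} {M N : Type u}
    {SM : L.Structure M} {SN : L.Structure N} {v : Fin n → M} (h : Forces ψ M SM v)
    (f : ElemEmb M N SM SN) : Forces ψ N SN (f ∘ v) := by
  induction ψ with
  | equal t₁ t₂ =>
    simp only [Forces, HomClass.realize_term] at h ⊢
    rw [h]
  | rel R ts =>
    simp only [Forces, HomClass.realize_term] at h ⊢
    exact (f.map_rel R _).2 h
  | not φ => exact fun P SP g => h P SP (g.comp f)
  | disj Φ ih => exact h.imp fun i hi => ih i hi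
  | conj Φ => exact fun P SP g => h P SP (g.comp f)
  | ex φ ih =>
    obtain ⟨b, hb⟩ := h
    refine ⟨f b, ?_⟩
    rw [← Fin.comp_snoc]
    exact ih hb
  | all φ => exact fun P SP g => h P SP (g.comp f)

/-- Tuples of the same type cannot force contradictory formulas. -/
theorem Forces.not_forces_not {L : FirstOrder.Language.{u, u}} {n : ℕ} {φ : InfForm L n}
    {M N : Type u} [SM : L.Structure M] [SN : L.Structure N] [Nonempty M] {v : Fin n → M}
    {w : Fin n → N} (h : Forces φ N SN w)
    (hvw : SameType (L := L) (v ∘ ULift.down.{u}) (w ∘ ULift.down.{u})) :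
    ¬ Forces φ.not M SM v := by
  intro h'
  obtain ⟨P, SP, f, g, hfg⟩ := hvw.exists_amalgam
  have : f ∘ v = g ∘ w := funext fun i => congrFun hfg ⟨i⟩
  refine h' P SP f ?_
  have hP := h.mono g
  rw [← this] at hP
  exact hP

/-- An `ω`-saturated structure decides every infinitary formula. -/
theorem IsOmegaSaturated.decides {L : FirstOrder.Language.{u, u}} {G : Type u}
    [SG : L.Structure G] (hG : IsOmegaSaturated L G) {n : ℕ} (ψ : InfForm L n) (v : Fin n → G) :
    Decides ψ G SG v := by
  induction ψ with
  | equal t₁ t₂ =>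
    refine or_iff_not_imp_left.2 fun h N SN f hN => h ?_
    change t₁.realize (f ∘ v) = t₂.realize (f ∘ v) at hN
    simp only [HomClass.realize_term] at hN
    exact f.injective hN
  | rel R ts =>
    refine or_iff_not_imp_left.2 fun h N SN f hN => h ?_
    change Structure.RelMap R (fun i => (ts i).realize (f ∘ v)) at hN
    simp only [HomClass.realize_term] at hN
    exact (f.map_rel R _).1 hN
  | not φ ih =>
    refine (ih v).symm.imp id fun h N SN f hN => ?_
    exact hN N SN (.refl L N) (h.mono f)
  | disj Φ ih =>
    refine or_iff_not_imp_left.2 fun h N SN f ⟨i, hi⟩ => ?_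
    exact ((ih i v).resolve_left fun hi' => h ⟨i, hi'⟩) N SN f hi
  | conj Φ ih =>
    by_cases h : ∀ i, Forces (Φ i) G SG v
    · exact .inl fun N SN f i => ⟨N, SN, .refl L N, (h i).mono f⟩
    · obtain ⟨i, hi⟩ := not_forall.1 h
      refine .inr fun N SN f hN => ?_
      obtain ⟨P, SP, g, hP⟩ := hN N SN (.refl L N) i
      exact (ih i v).resolve_left hi P SP (g.comp f) hP
  | ex φ ih =>
    refine or_iff_not_imp_left.2 fun h N SN f ⟨c, hc⟩ => ?_
    obtain ⟨b, hb⟩ := hG N f _ v c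
    have : Nonempty G := ⟨b⟩
    exact hc.not_forces_not hb ((ih (Fin.snoc v b)).resolve_left fun h' => h ⟨b, h'⟩)
  | all φ ih =>
    by_cases h : ∀ b, Forces φ G SG (Fin.snoc v b)
    · refine .inl fun N SN f c => ?_
      obtain ⟨b, hb⟩ := hG N f _ v c
      have : Nonempty N := ⟨c⟩
      obtain ⟨P, SP, g, g', hgg'⟩ := hb.symm.exists_amalgam
      refine ⟨P, SP, g, ?_⟩
      have hP := (h b).mono g'
      have heq : g ∘ (Fin.snoc (f ∘ v) c : Fin (_ + 1) → N) = g' ∘ (Fin.snoc v b) :=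
        funext fun i => congrFun hgg' ⟨i⟩
      rw [← heq, Fin.comp_snoc] at hP
      exact hP
    · obtain ⟨b, hb⟩ := not_forall.1 h
      refine .inr fun N SN f hN => ?_
      obtain ⟨P, SP, g, hP⟩ := hN N SN (.refl L N) (f b)
      refine (ih (Fin.snoc v b)).resolve_left hb P SP (g.comp f) ?_
      change Forces φ P SP ((g.comp f) ∘ Fin.snoc v b)
      rw [Fin.comp_snoc]
      exact hP

/-- Every structure has an `𝔸`-generic elementary extension, for any fragment `𝔸`:
an extension deciding every instance of every formula of `𝔸`. -/
theorem stmt9 {L : FirstOrder.Language.{u, u}} (𝔸 : ∀ n : ℕ, Set (InfForm L n))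
    (h𝔸 : IsFragment L 𝔸) (A : Type u) (SA : L.Structure A) :
    ∃ (G : Type u) (SG : L.Structure G) (_ : ElemEmb A G SA SG),
      IsGeneric 𝔸 G SG := by
  obtain ⟨G, SG, f, hG⟩ := exists_isOmegaSaturated (L := L) A
  exact ⟨G, SG, f, fun _ ψ _ v => hG.decides ψ v⟩

end InfinitaryForcing
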